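/- arXiv:2305.09739 — 2 statements merged into one kernel-verified Lean document; each statement's English description precedes it below -/
import Mathlib

section
/- Consider a probability space (Ω, 𝔉, ℙ) and, for each i ∈ {1,…,n} with n ≥ 1, events A_i (resource i is in outage) and B_i (the predictor accepts resource i). Assume the pairs (A_i, B_i) are mutually independent across i (the σ-algebras generated by {A_i, B_i} for distinct i are mutually independent) and identically distributed, i.e. ℙ(A_i) = ℙ(A_1), ℙ(B_i) = ℙ(B_1) and ℙ(A_i ∩ B_i) = ℙ(A_1 ∩ B_1) for all i. Let the system outage event be E_n = (⋃_{i=1}^{n-1} (A_i ∩ B_i ∩ ⋂_{j<i} B_jᶜ)) ∪ (A_n ∩ ⋂_{j=1}^{n-1} B_jᶜ). If ℙ(B_1) > 0, then ℙ(E_n) = ℙ(A_1)·(1 − ℙ(B_1))^{n−1} + ℙ(A_1 | B_1)·(1 − (1 − ℙ(B_1))^{n−1}). -/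
open MeasureTheory ProbabilityTheory Filter

theorem key_aux {Ω : Type*} [MeasurableSpace Ω] (μ : Measure Ω) [IsProbabilityMeasure μ]
    (A B : ℕ → Set Ω) (hB : ∀ i, MeasurableSet (B i))
    (hindep : iIndep (fun i => MeasurableSpace.generateFrom {A i, B i}) μ)
    (hBid : ∀ i, μ (B i) = μ (B 0)) (k : ℕ) (C : Set Ω)
    (hC : MeasurableSet[MeasurableSpace.generateFrom {A k, B k}] C) :
    μ (C ∩ ⋂ j < k, (B j)ᶜ) = μ C * (1 - μ (B 0)) ^ k := by
  have h := hindep.meas_biInter (S := Finset.range (k + 1))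
    (s := fun j => if j = k then C else (B j)ᶜ) (by
      intro j _
      by_cases hj : j = k
      · subst hj; simpa using hC
      · simp only [hj, if_false]
        exact (MeasurableSpace.measurableSet_generateFrom (by simp)).compl)
  have hset : (⋂ j ∈ Finset.range (k + 1), (if j = k then C else (B j)ᶜ))
      = C ∩ ⋂ j < k, (B j)ᶜ := by
    ext x
    simp only [Set.mem_iInter, Finset.mem_range, Set.mem_inter_iff]
    constructor
    · intro hx
      refine ⟨by simpa using hx k (by omega), fun j hj => ?_⟩
      have := hx j (by omega)
      rwa [if_neg (by omega)] at this
    · rintro ⟨h1, h2⟩ j hj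
      by_cases hjk : j = k
      · simpa [hjk] using h1
      · rw [if_neg hjk]; exact h2 j (by omega)
  rw [hset, Finset.prod_range_succ] at h
  rw [h, mul_comm]
  congr 1
  · simp
  · rw [Finset.prod_congr rfl (g := fun _ => 1 - μ (B 0))]
    · simp
    · intro j hj
      rw [Finset.mem_range] at hj
      rw [if_neg (by omega), prob_compl_eq_one_sub (hB j), hBid j]

/-- Outage probability of the greedy `n`-resource allocation system:
`A i` = resource `i` in outage, `B i` = predictor accepts resource `i`
(resources indexed `0, …, n-1`).  The system outage probability equals
`P(A₀)·(1 − P(B₀))^(n−1) + P(A₀ | B₀)·(1 − (1 − P(B₀))^(n−1))`. -/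
theorem stmt_0 {Ω : Type*} [MeasurableSpace Ω] (μ : Measure Ω) [IsProbabilityMeasure μ]
    (A B : ℕ → Set Ω)
    (hA : ∀ i, MeasurableSet (A i)) (hB : ∀ i, MeasurableSet (B i))
    (hindep : iIndep (fun i => MeasurableSpace.generateFrom {A i, B i}) μ)
    (hAid : ∀ i, μ (A i) = μ (A 0))
    (hBid : ∀ i, μ (B i) = μ (B 0))
    (hABid : ∀ i, μ (A i ∩ B i) = μ (A 0 ∩ B 0))
    (n : ℕ) (hn : 1 ≤ n)
    (hB0 : 0 < μ (B 0)) :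
    μ ((⋃ i < n - 1, (A i ∩ B i ∩ ⋂ j < i, (B j)ᶜ)) ∪ (A (n - 1) ∩ ⋂ j < n - 1, (B j)ᶜ))
      = μ (A 0) * (1 - μ (B 0)) ^ (n - 1)
        + (μ (A 0 ∩ B 0) / μ (B 0)) * (1 - (1 - μ (B 0)) ^ (n - 1)) := by
  have mA : ∀ k, MeasurableSet[MeasurableSpace.generateFrom {A k, B k}] (A k) :=
    fun k => MeasurableSpace.measurableSet_generateFrom (by simp)
  have mB : ∀ k, MeasurableSet[MeasurableSpace.generateFrom {A k, B k}] (B k) :=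
    fun k => MeasurableSpace.measurableSet_generateFrom (by simp)
  have key := key_aux μ A B hB hindep hBid
  generalize n - 1 = m
  have hI : ∀ k, MeasurableSet (⋂ j < k, (B j)ᶜ) := fun k =>
    MeasurableSet.iInter fun j => MeasurableSet.iInter fun _ => (hB j).compl
  rw [measure_union _ ((hA m).inter (hI m)), key m _ (mA m), hAid m, add_comm]
  · congr 1
    have hU : (⋃ i < m, (A i ∩ B i ∩ ⋂ j < i, (B j)ᶜ))
        = ⋃ i ∈ Finset.range m, (A i ∩ B i ∩ ⋂ j < i, (B j)ᶜ) := by simp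
    rw [hU, measure_biUnion_finset _ (fun i _ => ((hA i).inter (hB i)).inter (hI i))]
    · rw [Finset.sum_congr rfl (g := fun i => μ (A 0 ∩ B 0) * (1 - μ (B 0)) ^ i)
        (fun i _ => by rw [key i _ ((mA i).inter (mB i)), hABid i]), ← Finset.mul_sum]
      have hb1 : μ (B 0) ≤ 1 := prob_le_one
      have hbt : μ (B 0) ≠ ⊤ := measure_ne_top _ _
      generalize μ (B 0) = b at *
      rw [div_eq_mul_inv, mul_assoc]
      congr 1
      have hs : b * ∑ i ∈ Finset.range m, (1 - b) ^ i + (1 - b) ^ m = 1 := by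
        clear hU
        induction m with
        | zero => simp
        | succ m ih =>
          rw [Finset.sum_range_succ, mul_add, add_assoc, pow_succ, mul_comm b ((1 - b) ^ m),
            ← mul_add, add_tsub_cancel_of_le hb1, mul_one, ih]
      have hq : (1 - b) ^ m ≠ ⊤ := ENNReal.pow_ne_top (by simp)
      rw [← ENNReal.eq_sub_of_add_eq hq hs, ← mul_assoc, ENNReal.inv_mul_cancel hB0.ne' hbt,
        one_mul]
    · intro i _ j _ hij
      rw [Function.onFun, Set.disjoint_left]
      rintro x ⟨⟨_, hxi⟩, hi⟩ ⟨⟨_, hxj⟩, hj⟩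
      simp only [Set.mem_iInter] at hi hj
      rcases lt_or_gt_of_ne hij with h | h
      · exact hj i h hxi
      · exact hi j h hxj
  · rw [Set.disjoint_left]
    rintro x hx ⟨_, hm⟩
    simp only [Set.mem_iUnion, Set.mem_iInter] at hx hm
    obtain ⟨i, hi, ⟨_, hxi⟩, _⟩ := hx
    exact hm i hi hxi
end

section
/- Consider a probability space (Ω, 𝔉, ℙ) and, for i ∈ {1,…,n} with n ≥ 1, event pairs (A_i, B_i) that are mutually independent across i and identically distributed, i.e. ℙ(A_i) = ℙ(A_1), ℙ(B_i) = ℙ(B_1) and ℙ(A_i ∩ B_i) = ℙ(A_1 ∩ B_1) for all i, with ℙ(B_1) > 0. Let E_n = (⋃_{i=1}^{n-1} (A_i ∩ B_i ∩ ⋂_{j<i} B_jᶜ)) ∪ (A_n ∩ ⋂_{j=1}^{n-1} B_jᶜ). Then min(ℙ(A_1), ℙ(A_1|B_1)) ≤ ℙ(E_n) ≤ max(ℙ(A_1), ℙ(A_1|B_1)); that is, the system outage probability is a convex combination (a weighted average) of the single-resource outage probability P_1 and the infinite-resource outage probability P_∞, with weights (1−ℙ(B_1))^{n−1} and 1−(1−ℙ(B_1))^{n−1}.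 -/
open MeasureTheory ProbabilityTheory Filter

lemma aux_prod {Ω : Type*} [MeasurableSpace Ω] (μ : Measure Ω) [IsProbabilityMeasure μ]
    (A B : ℕ → Set Ω) (hB : ∀ i, MeasurableSet (B i))
    (hindep : iIndep (fun i => MeasurableSpace.generateFrom {A i, B i}) μ)
    (hBid : ∀ i, μ (B i) = μ (B 0)) (i : ℕ) (D : Set Ω)
    (hD : MeasurableSet[MeasurableSpace.generateFrom {A i, B i}] D) :
    μ.real (D ∩ ⋂ j < i, (B j)ᶜ) = μ.real D * (1 - μ.real (B 0)) ^ i := by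
  classical
  have h := hindep.meas_biInter (S := Finset.range (i + 1))
    (s := fun j => if j = i then D else (B j)ᶜ) (by
      intro j _
      by_cases hj : j = i
      · subst hj; simpa using hD
      · simp only [hj, if_false]
        exact (MeasurableSpace.measurableSet_generateFrom (by simp)).compl)
  have hset : (⋂ j ∈ Finset.range (i + 1), (if j = i then D else (B j)ᶜ))
      = D ∩ ⋂ j < i, (B j)ᶜ := by
    rw [Finset.range_add_one, Finset.set_biInter_insert]
    simp only [if_true, Finset.mem_range]
    congr 1
    refine Set.iInter_congr fun j => Set.iInter_congr fun hj => ?_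
    rw [if_neg hj.ne]
  rw [hset, Finset.prod_range_succ] at h
  have hp : ∏ j ∈ Finset.range i, μ (if j = i then D else (B j)ᶜ)
      = ∏ j ∈ Finset.range i, μ (B 0)ᶜ := by
    refine Finset.prod_congr rfl fun j hj => ?_
    rw [if_neg (Finset.mem_range.1 hj).ne, prob_compl_eq_one_sub (hB j),
      prob_compl_eq_one_sub (hB 0), hBid]
  rw [hp] at h
  simp only [if_true, Finset.prod_const, Finset.card_range] at h
  rw [← probReal_compl_eq_one_sub (hB 0)]
  simp only [measureReal_def, h, ENNReal.toReal_mul, ENNReal.toReal_pow]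
  ring

lemma aux_union {Ω : Type*} [MeasurableSpace Ω] (μ : Measure Ω) [IsProbabilityMeasure μ]
    (A B : ℕ → Set Ω)
    (hA : ∀ i, MeasurableSet (A i)) (hB : ∀ i, MeasurableSet (B i))
    (hindep : iIndep (fun i => MeasurableSpace.generateFrom {A i, B i}) μ)
    (hBid : ∀ i, μ (B i) = μ (B 0))
    (hABid : ∀ i, μ (A i ∩ B i) = μ (A 0 ∩ B 0))
    (m : ℕ) (C : Set Ω) (hC : MeasurableSet C) :
    μ.real ((⋃ i < m, (A i ∩ B i ∩ ⋂ j < i, (B j)ᶜ)) ∪ (C ∩ ⋂ j < m, (B j)ᶜ))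
      = (∑ i ∈ Finset.range m, μ.real (A 0 ∩ B 0) * (1 - μ.real (B 0)) ^ i)
        + μ.real (C ∩ ⋂ j < m, (B j)ᶜ) := by
  have hI : ∀ i, MeasurableSet (⋂ j < i, (B j)ᶜ) := fun i =>
    MeasurableSet.iInter fun j => MeasurableSet.iInter fun _ => (hB j).compl
  induction m generalizing C with
  | zero => simp
  | succ m ih =>
    rw [measureReal_union _ (hC.inter (hI _)) (measure_ne_top _ _) (measure_ne_top _ _)]
    · congr 1
      have hs : (⋃ i < m + 1, (A i ∩ B i ∩ ⋂ j < i, (B j)ᶜ))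
          = (⋃ i < m, (A i ∩ B i ∩ ⋂ j < i, (B j)ᶜ)) ∪ ((A m ∩ B m) ∩ ⋂ j < m, (B j)ᶜ) := by
        rw [Set.biUnion_lt_succ]
      rw [hs, ih _ ((hA m).inter (hB m)), Finset.sum_range_succ,
        aux_prod μ A B hB hindep hBid m]
      · simp only [measureReal_def, hABid m]
      · exact (MeasurableSpace.measurableSet_generateFrom (by simp)).inter
          (MeasurableSpace.measurableSet_generateFrom (by simp))
    · rw [Set.disjoint_left]
      intro x hx hx'
      simp only [Set.mem_iUnion, Set.mem_inter_iff, Set.mem_iInter, Set.mem_compl_iff] at hx hx'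
      obtain ⟨i, hi, h, _⟩ := hx
      exact hx'.2 i hi h.2

/-- The outage probability of the greedy `n`-resource system is a weighted
average of the single-resource outage probability `P(A₀)` and the
infinite-resource outage probability `P(A₀ | B₀)`, hence lies between their
minimum and maximum. -/
theorem stmt_14 {Ω : Type*} [MeasurableSpace Ω] (μ : Measure Ω) [IsProbabilityMeasure μ]
    (A B : ℕ → Set Ω)
    (hA : ∀ i, MeasurableSet (A i)) (hB : ∀ i, MeasurableSet (B i))
    (hindep : iIndep (fun i => MeasurableSpace.generateFrom {A i, B i}) μ)
    (hAid : ∀ i, μ (A i) = μ (A 0))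
    (hBid : ∀ i, μ (B i) = μ (B 0))
    (hABid : ∀ i, μ (A i ∩ B i) = μ (A 0 ∩ B 0))
    (n : ℕ) (hn : 1 ≤ n)
    (hB0 : 0 < μ (B 0)) :
    min (μ (A 0)) (μ (A 0 ∩ B 0) / μ (B 0))
        ≤ μ ((⋃ i < n - 1, (A i ∩ B i ∩ ⋂ j < i, (B j)ᶜ)) ∪ (A (n - 1) ∩ ⋂ j < n - 1, (B j)ᶜ)) ∧
      μ ((⋃ i < n - 1, (A i ∩ B i ∩ ⋂ j < i, (B j)ᶜ)) ∪ (A (n - 1) ∩ ⋂ j < n - 1, (B j)ᶜ))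
        ≤ max (μ (A 0)) (μ (A 0 ∩ B 0) / μ (B 0)) := by
  obtain ⟨m, rfl⟩ : ∃ m, n = m + 1 := ⟨n - 1, by omega⟩
  simp only [Nat.add_sub_cancel]
  have key := aux_union μ A B hA hB hindep hBid hABid m (A m) (hA m)
  rw [aux_prod μ A B hB hindep hBid m (A m)
    (MeasurableSpace.measurableSet_generateFrom (by simp)), ← Finset.mul_sum] at key
  have hAm : μ.real (A m) = μ.real (A 0) := by simp only [measureReal_def, hAid m]
  rw [hAm] at key
  have hb : 0 < μ.real (B 0) := ENNReal.toReal_pos hB0.ne' (measure_ne_top _ _)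
  have hb1 : μ.real (B 0) ≤ 1 := measureReal_le_one
  have hg := mul_neg_geom_sum (1 - μ.real (B 0)) m
  set E := (⋃ i < m, (A i ∩ B i ∩ ⋂ j < i, (B j)ᶜ)) ∪ (A m ∩ ⋂ j < m, (B j)ᶜ) with hE
  have hw0 : 0 ≤ (1 - μ.real (B 0)) ^ m := pow_nonneg (by linarith) _
  have hw1 : (1 - μ.real (B 0)) ^ m ≤ 1 := pow_le_one₀ (by linarith) (by linarith)
  obtain ⟨c, hc⟩ : ∃ c, c = μ.real (A 0 ∩ B 0) / μ.real (B 0) := ⟨_, rfl⟩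
  have hcb : μ.real (A 0 ∩ B 0) = c * μ.real (B 0) := by rw [hc]; field_simp
  have key2 : μ.real E = (1 - μ.real (B 0)) ^ m * μ.real (A 0)
      + (1 - (1 - μ.real (B 0)) ^ m) * c := by
    rw [key, hcb, ← hg]; ring
  have hc0 : 0 ≤ c := by rw [hc]; positivity
  have e1 : μ (A 0 ∩ B 0) / μ (B 0) = ENNReal.ofReal c := by
    rw [hc, ENNReal.ofReal_div_of_pos hb, ofReal_measureReal, ofReal_measureReal]
  rw [e1, ← ofReal_measureReal (μ := μ) (s := A 0), ← ofReal_measureReal (μ := μ) (s := E), key2,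
    ← ENNReal.ofReal_min, ← ENNReal.ofReal_max]
  generalize (1 - μ.real (B 0)) ^ m = w at *
  constructor
  · apply ENNReal.ofReal_le_ofReal
    nlinarith [min_le_left (μ.real (A 0)) c, min_le_right (μ.real (A 0)) c]
  · apply ENNReal.ofReal_le_ofReal
    nlinarith [le_max_left (μ.real (A 0)) c, le_max_right (μ.real (A 0)) c]
end
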